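/- Let G be a connected graph with at least one edge, u ∈ V(G), and α ∈ [0,1). For integers p ≥ q ≥ 1, let G_u(p,q) be the graph obtained from G by attaching two pendant paths of lengths p and q at u. Then ρ_α(G_u(p,q)) > ρ_α(G_u(p+1, q−1)). -/

import Mathlib

/-- The graph `G(L, u)` obtained from `G` by attaching, for each entry `ℓ` of the list `L`,
a pendant path with `ℓ` edges at the vertex `u`. -/
def attach {V : Type} (G : SimpleGraph V) (u : V) (L : List ℕ) :
    SimpleGraph (V ⊕ (Σ i : Fin L.length, Fin (L.get i))) :=
  SimpleGraph.fromRel (fun x y =>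
    match x, y with
    | Sum.inl a, Sum.inl b => G.Adj a b
    | Sum.inl a, Sum.inr ⟨_, j⟩ => a = u ∧ (j : ℕ) = 0
    | Sum.inr ⟨i, j⟩, Sum.inr ⟨i', j'⟩ => (i : ℕ) = (i' : ℕ) ∧ (j : ℕ) + 1 = (j' : ℕ)
    | _, _ => False)

/-- The matrix `A_α(G) = α D(G) + (1 - α) A(G)`. -/
noncomputable def Aalpha {V : Type} [Fintype V] [DecidableEq V] (α : ℝ) (G : SimpleGraph V) :
    Matrix V V ℝ :=
  letI := Classical.decRel G.Adj
  α • Matrix.diagonal (fun v => (G.degree v : ℝ)) + (1 - α) • G.adjMatrix ℝ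

/-- `ρ_α(G)`, the largest eigenvalue of `A_α(G)`. -/
noncomputable def rho {V : Type} [Fintype V] [DecidableEq V] (α : ℝ) (G : SimpleGraph V) : ℝ :=
  sSup (spectrum ℝ (Aalpha α G))

/-! In both graphs the two attached paths form, together with `u`, a path on `p + q + 1` vertices,
and the graphs differ only in the position of `u` on it. Take the positive Perron vector of
`G_u(p + 1, q - 1)`, move the value at the end of the longer arm to the end of the shorter one, and
polarize the other values on the path with respect to its reflection, moving the larger value of
each mirror pair towards the shorter arm. This gives a vector on the vertices of `G_u(p, q)` with
the same norm whose quadratic form is at least as large. If `ρ_α` of `G_u(p, q)` were at most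
`ρ_α` of `G_u(p + 1, q - 1)`, this vector would be an eigenvector for the latter. The two
eigenvectors share the value at the transported end, so the eigenvalue equations give them the same
values at distance `1, …, q` from it, and comparing the equations at distance `q`, where `G_u(p, q)`
has its root `u`, leaves `(A_α(G) g)_u ≤ 0` for a positive vector `g` on `V(G)`. This is absurd, as
`u` has a neighbour in `G`. -/

open Matrix SimpleGraph
open Finset hiding attach

section Matrix

variable {n : Type*} [Fintype n] {A : Matrix n n ℝ}

lemma dotProduct_mulVec_mono (hA : ∀ i j, 0 ≤ A i j) {x y : n → ℝ} (hx : 0 ≤ x) (hxy : x ≤ y) :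
    x ⬝ᵥ A *ᵥ x ≤ y ⬝ᵥ A *ᵥ y := by
  simp only [dotProduct, mulVec]
  gcongr with i _ j
  · exact sum_nonneg fun j _ => mul_nonneg (hA i j) (hx j)
  · exact hx.trans hxy i
  · exact hxy i
  · exact hA i j
  · exact hxy j

lemma dotProduct_mulVec_le_abs (hA : ∀ i j, 0 ≤ A i j) (x : n → ℝ) :
    x ⬝ᵥ A *ᵥ x ≤ |x| ⬝ᵥ A *ᵥ |x| := by
  simp only [dotProduct, mulVec, mul_sum, Pi.abs_apply]
  refine sum_le_sum fun i _ => sum_le_sum fun j _ => ?_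
  calc x i * (A i j * x j) = A i j * (x i * x j) := by ring
    _ ≤ A i j * (|x i| * |x j|) := by
      rw [← abs_mul]
      exact mul_le_mul_of_nonneg_left (le_abs_self _) (hA i j)
    _ = |x i| * (A i j * |x j|) := by ring

lemma pos_of_mulVec_eq_smul (hA : A.IsIrreducible) {μ : ℝ} {x : n → ℝ} (hx : 0 ≤ x) (hx0 : x ≠ 0)
    (h : A *ᵥ x = μ • x) (i : n) : 0 < x i := by
  classical
  obtain ⟨j, hj⟩ := Function.ne_iff.1 hx0
  refine (hx i).lt_of_ne' fun hi => hj ?_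
  obtain ⟨k, -, hk⟩ := (isIrreducible_iff_exists_pow_pos hA.nonneg).1 hA i j
  have hpow : ∀ m : ℕ, A ^ m *ᵥ x = μ ^ m • x := by
    intro m
    induction m with
    | zero => simp
    | succ m ih => rw [pow_succ, ← mulVec_mulVec, h, mulVec_smul, ih, smul_smul, pow_succ']
  have hsum : ∑ j, (A ^ k) i j * x j = 0 := by
    simpa [hi, mulVec, dotProduct] using congrFun (hpow k) i
  have hterm := (sum_eq_zero_iff_of_nonneg fun j _ =>
    mul_nonneg (pow_apply_nonneg hA.nonneg k i j) (hx j)).1 hsum j (mem_univ j)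
  exact (mul_eq_zero.1 hterm).resolve_left hk.ne'

variable [DecidableEq n]

lemma posSemidef_smul_one_sub (hA : A.IsHermitian) {μ : ℝ} (hμ : sSup (spectrum ℝ A) ≤ μ) :
    (μ • (1 : Matrix n n ℝ) - A).PosSemidef := by
  have hfin : (spectrum ℝ A).Finite := hA.spectrum_real_eq_range_eigenvalues ▸ Set.finite_range _
  refine posSemidef_iff_isHermitian_and_spectrum_nonneg.2
    ⟨(isHermitian_one.smul (IsSelfAdjoint.all _)).sub hA, ?_⟩
  rw [← Algebra.algebraMap_eq_smul_one, ← spectrum.singleton_sub_eq, Set.singleton_sub]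
  rintro _ ⟨ν, hν, rfl⟩
  exact sub_nonneg.2 ((le_csSup hfin.bddAbove hν).trans hμ)

lemma mulVec_eq_smul_of_sSup_spectrum_le (hA : A.IsHermitian) {μ : ℝ}
    (hμ : sSup (spectrum ℝ A) ≤ μ) {x : n → ℝ} (hx : μ * (x ⬝ᵥ x) ≤ x ⬝ᵥ A *ᵥ x) :
    A *ᵥ x = μ • x := by
  have hpsd := posSemidef_smul_one_sub hA hμ
  have hform : star x ⬝ᵥ (μ • (1 : Matrix n n ℝ) - A) *ᵥ x = μ * (x ⬝ᵥ x) - x ⬝ᵥ A *ᵥ x := by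
    rw [star_trivial, sub_mulVec, smul_mulVec, one_mulVec, dotProduct_sub, dotProduct_smul,
      smul_eq_mul]
  have hker := (hpsd.dotProduct_mulVec_zero_iff x).1 <|
    (hform.trans_le (sub_nonpos.2 hx)).antisymm (hpsd.dotProduct_mulVec_nonneg x)
  rw [sub_mulVec, smul_mulVec, one_mulVec] at hker
  exact (sub_eq_zero.1 hker).symm

lemma exists_mulVec_eq_sSup_spectrum_smul [Nonempty n] (hA : A.IsHermitian) :
    ∃ x : n → ℝ, x ≠ 0 ∧ A *ᵥ x = sSup (spectrum ℝ A) • x := by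
  have hmem : sSup (spectrum ℝ A) ∈ spectrum ℝ A := by
    rw [hA.spectrum_real_eq_range_eigenvalues]
    exact (Set.range_nonempty _).csSup_mem (Set.finite_range _)
  rw [← spectrum_toLin' A, ← Module.End.hasEigenvalue_iff_mem_spectrum] at hmem
  obtain ⟨x, hx⟩ := hmem.exists_hasEigenvector
  exact ⟨x, hx.2, by simpa only [toLin'_apply, spectrum_toLin'] using hx.apply_eq_smul⟩

lemma exists_pos_mulVec_eq_sSup_spectrum_smul [Nonempty n] (hA : A.IsHermitian)
    (hirr : A.IsIrreducible) :
    ∃ x : n → ℝ, (∀ i, 0 < x i) ∧ A *ᵥ x = sSup (spectrum ℝ A) • x := by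
  obtain ⟨x, hx0, hx⟩ := exists_mulVec_eq_sSup_spectrum_smul hA
  have habs : A *ᵥ |x| = sSup (spectrum ℝ A) • |x| := by
    refine mulVec_eq_smul_of_sSup_spectrum_le hA le_rfl ?_
    calc sSup (spectrum ℝ A) * (|x| ⬝ᵥ |x|) = x ⬝ᵥ A *ᵥ x := by
          rw [hx, dotProduct_smul, smul_eq_mul]
          simp only [dotProduct, Pi.abs_apply, abs_mul_abs_self]
      _ ≤ |x| ⬝ᵥ A *ᵥ |x| := dotProduct_mulVec_le_abs hirr.nonneg x
  have hx0' : |x| ≠ 0 := fun h => hx0 (funext fun i => abs_eq_zero.1 (congrFun h i))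
  exact ⟨|x|, pos_of_mulVec_eq_smul hirr (abs_nonneg x) hx0' habs, habs⟩

end Matrix

section AlphaMatrix

variable {V : Type} [Fintype V] [DecidableEq V] {α : ℝ} {G : SimpleGraph V}

lemma Aalpha_apply (α : ℝ) (G : SimpleGraph V) [DecidableRel G.Adj] (v w : V) :
    Aalpha α G v w = α * (if v = w then (G.degree v : ℝ) else 0) +
      (1 - α) * if G.Adj v w then 1 else 0 := by
  obtain rfl : ‹DecidableRel G.Adj› = Classical.decRel G.Adj := Subsingleton.elim _ _
  simp [Aalpha, diagonal_apply]

lemma Aalpha_mulVec_apply (α : ℝ) (G : SimpleGraph V) [DecidableRel G.Adj] (x : V → ℝ) (v : V) :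
    (Aalpha α G *ᵥ x) v = ∑ w, if G.Adj v w then α * x v + (1 - α) * x w else 0 := by
  obtain rfl : ‹DecidableRel G.Adj› = Classical.decRel G.Adj := Subsingleton.elim _ _
  rw [← sum_filter, ← neighborFinset_eq_filter, sum_add_distrib, sum_const, ← mul_sum,
    card_neighborFinset_eq_degree, Aalpha, add_mulVec, smul_mulVec, smul_mulVec, Pi.add_apply,
    Pi.smul_apply, Pi.smul_apply, mulVec_diagonal, adjMatrix_mulVec_apply]
  simp only [smul_eq_mul, nsmul_eq_mul]
  ring

lemma Aalpha_isHermitian (α : ℝ) (G : SimpleGraph V) : (Aalpha α G).IsHermitian := by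
  let := Classical.decRel G.Adj
  exact ((isHermitian_diagonal _).smul (IsSelfAdjoint.all α)).add
    ((G.isHermitian_adjMatrix ℝ).smul (IsSelfAdjoint.all (1 - α)))

lemma Aalpha_nonneg (hα0 : 0 ≤ α) (hα1 : α ≤ 1) (v w : V) : 0 ≤ Aalpha α G v w := by
  classical
  have : 0 ≤ 1 - α := sub_nonneg.2 hα1
  rw [Aalpha_apply]
  positivity

lemma Aalpha_pos_of_adj (hα1 : α < 1) {v w : V} (h : G.Adj v w) : 0 < Aalpha α G v w := by
  classical
  simpa [Aalpha_apply, h, h.ne] using hα1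

lemma Aalpha_isIrreducible [Nontrivial V] (hα0 : 0 ≤ α) (hα1 : α < 1) (hG : G.Preconnected) :
    (Aalpha α G).IsIrreducible := by
  let : Quiver V := toQuiver (Aalpha α G)
  have hconn : Quiver.IsStronglyConnected V := fun v w => by
    obtain ⟨W⟩ := hG v w
    induction W with
    | nil => exact ⟨.nil⟩
    | cons h _ ih =>
      exact ih.map (Quiver.Hom.toPath (PLift.up (Aalpha_pos_of_adj hα1 h))).comp
  obtain ⟨v⟩ : Nonempty V := inferInstance
  obtain ⟨w, hvw⟩ := hG.exists_adj_of_nontrivial v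
  exact ⟨Aalpha_nonneg hα0 hα1.le,
    hconn.isSStronglyConnected_of_hom ⟨Aalpha_pos_of_adj hα1 hvw⟩⟩

lemma Aalpha_mulVec_pos [Nontrivial V] (hα0 : 0 ≤ α) (hα1 : α < 1) (hG : G.Preconnected)
    {x : V → ℝ} (hx : ∀ v, 0 < x v) (v : V) : 0 < (Aalpha α G *ᵥ x) v := by
  obtain ⟨w, hvw⟩ := hG.exists_adj_of_nontrivial v
  exact sum_pos' (fun j _ => mul_nonneg (Aalpha_nonneg hα0 hα1.le v j) (hx j).le)
    ⟨w, mem_univ w, mul_pos (Aalpha_pos_of_adj hα1 hvw) (hx w)⟩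

end AlphaMatrix

section PathEnergy

/-- The energy of the edge joining vertices with values `a` and `b`: the contribution of that edge
to the quadratic form of `A_α`. -/
def edgeEnergy (α a b : ℝ) : ℝ := α * (a ^ 2 + b ^ 2) + 2 * (1 - α) * (a * b)

/-- The quadratic form of `A_α` of the path with `m` edges, at the vector `z 0, …, z m`. -/
def pathEnergy (α : ℝ) (m : ℕ) (z : ℕ → ℝ) : ℝ := ∑ k ∈ range m, edgeEnergy α (z k) (z (k + 1))

variable {α : ℝ}

lemma edgeEnergy_comm (α a b : ℝ) : edgeEnergy α a b = edgeEnergy α b a := by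
  unfold edgeEnergy
  ring

lemma edgeEnergy_mono_right (hα0 : 0 ≤ α) (hα1 : α ≤ 1) {a b b' : ℝ} (ha : 0 ≤ a) (hb : 0 ≤ b)
    (h : b ≤ b') : edgeEnergy α a b ≤ edgeEnergy α a b' := by
  have : 0 ≤ 1 - α := sub_nonneg.2 hα1
  unfold edgeEnergy
  gcongr

lemma edgeEnergy_add_le_max_add_min (hα1 : α ≤ 1) (a a' b b' : ℝ) :
    edgeEnergy α a a' + edgeEnergy α b b' ≤
      edgeEnergy α (max a b) (max a' b') + edgeEnergy α (min a b) (min a' b') := by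
  have hα : 0 ≤ 1 - α := sub_nonneg.2 hα1
  unfold edgeEnergy
  rcases le_total a b with h | h <;> rcases le_total a' b' with h' | h' <;>
    simp only [h, h', max_eq_left, max_eq_right, min_eq_left, min_eq_right] <;>
    nlinarith [mul_nonneg hα (mul_nonneg (sub_nonneg.2 h) (sub_nonneg.2 h'))]

lemma edgeEnergy_eq_add (α a b : ℝ) :
    edgeEnergy α a b = a * (α * a + (1 - α) * b) + b * (α * b + (1 - α) * a) := by
  unfold edgeEnergy
  ring

lemma pathEnergy_eq_sum_mul (α : ℝ) (ℓ : ℕ) (f : ℕ → ℝ) :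
    pathEnergy α ℓ f = f 0 * (if 0 < ℓ then α * f 0 + (1 - α) * f 1 else 0) +
      ∑ j ∈ range ℓ, f (j + 1) * ((α * f (j + 1) + (1 - α) * f j) +
        if j + 1 < ℓ then α * f (j + 1) + (1 - α) * f (j + 2) else 0) := by
  rcases ℓ with _ | ℓ
  · simp [pathEnergy]
  have hforward : ∑ j ∈ range (ℓ + 1), f (j + 1) *
      (if j + 1 < ℓ + 1 then α * f (j + 1) + (1 - α) * f (j + 2) else 0) =
        ∑ j ∈ range ℓ, f (j + 1) * (α * f (j + 1) + (1 - α) * f (j + 2)) := by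
    rw [sum_range_succ, if_neg (lt_irrefl _), mul_zero, add_zero]
    exact sum_congr rfl fun j hj => by rw [if_pos (Nat.succ_lt_succ (mem_range.1 hj))]
  simp only [pathEnergy, edgeEnergy_eq_add, mul_add (f _) (_ + _) (ite _ _ _), sum_add_distrib]
  rw [hforward, sum_range_succ', if_pos ℓ.succ_pos]
  ring

end PathEnergy

lemma sum_fin_ite_val_eq (n k : ℕ) (h : ℕ → ℝ) :
    ∑ j : Fin n, (if (j : ℕ) = k then h j else 0) = if k < n then h k else 0 := by
  rw [Fin.sum_univ_eq_sum_range (fun j => if j = k then h j else 0) n]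
  simp

lemma sum_fin_ite_val_succ_or (n k : ℕ) (hk : k < n) (h : ℕ → ℝ) :
    ∑ j : Fin n, (if k + 1 = (j : ℕ) ∨ (j : ℕ) + 1 = k then h j else 0) =
      (if k = 0 then 0 else h (k - 1)) + if k + 1 < n then h (k + 1) else 0 := by
  have hsplit : ∀ j : ℕ, (if k + 1 = j ∨ j + 1 = k then h j else 0) =
      (if k = 0 then 0 else if j = k - 1 then h j else 0) + if j = k + 1 then h j else 0 := by
    intro j
    split_ifs <;> first | omega | simp
  simp only [hsplit, sum_add_distrib, sum_fin_ite_val_eq]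
  split_ifs with hk0 <;> simp [sum_fin_ite_val_eq, show k - 1 < n by omega]

section Attach

variable {V : Type} {G : SimpleGraph V} {u : V} {L : List ℕ}

lemma attach_adj_inl_inl (a b : V) :
    (attach G u L).Adj (.inl a) (.inl b) ↔ G.Adj a b := by
  simp only [attach, fromRel_adj, ne_eq, Sum.inl.injEq, G.adj_comm b a, or_self,
    and_iff_right_iff_imp]
  exact Adj.ne

lemma attach_adj_inl_inr (a : V) (i : Fin L.length) (j : Fin (L.get i)) :
    (attach G u L).Adj (.inl a) (.inr ⟨i, j⟩) ↔ a = u ∧ (j : ℕ) = 0 := by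
  simp [attach]

lemma attach_adj_inr_inl (a : V) (i : Fin L.length) (j : Fin (L.get i)) :
    (attach G u L).Adj (.inr ⟨i, j⟩) (.inl a) ↔ a = u ∧ (j : ℕ) = 0 := by
  rw [adj_comm, attach_adj_inl_inr]

lemma attach_adj_inr_inr (i i' : Fin L.length) (j : Fin (L.get i)) (j' : Fin (L.get i')) :
    (attach G u L).Adj (.inr ⟨i, j⟩) (.inr ⟨i', j'⟩) ↔
      i = i' ∧ ((j : ℕ) + 1 = j' ∨ (j' : ℕ) + 1 = j) := by
  simp only [attach, fromRel_adj, ← Fin.ext_iff]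
  refine ⟨?_, ?_⟩
  · rintro ⟨-, ⟨rfl, h⟩ | ⟨rfl, h⟩⟩
    exacts [⟨rfl, .inl h⟩, ⟨rfl, .inr h⟩]
  · rintro ⟨rfl, h⟩
    refine ⟨fun heq => ?_, by simpa using h⟩
    obtain rfl : j = j' := by simpa using heq
    omega

lemma attach_preconnected (hG : G.Preconnected) (u : V) (L : List ℕ) :
    (attach G u L).Preconnected := by
  have hbase : ∀ a, (attach G u L).Reachable (.inl u) (.inl a) := fun a =>
    (hG u a).map (G' := attach G u L) ⟨Sum.inl, (attach_adj_inl_inl _ _).2⟩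
  have harm : ∀ (i : Fin L.length) (k : ℕ) (hk : k < L.get i),
      (attach G u L).Reachable (.inl u) (.inr ⟨i, k, hk⟩) := by
    intro i k
    induction k with
    | zero => exact fun hk => ((attach_adj_inl_inr u i ⟨0, hk⟩).2 ⟨rfl, rfl⟩).reachable
    | succ k ih =>
      intro hk
      exact (ih (by omega)).trans
        ((attach_adj_inr_inr i i ⟨k, by omega⟩ ⟨k + 1, hk⟩).2 ⟨rfl, .inl rfl⟩).reachable
  have hroot : ∀ x, (attach G u L).Reachable (.inl u) x := by
    rintro (a | ⟨i, k, hk⟩)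
    exacts [hbase a, harm i k hk]
  exact fun x y => (hroot x).symm.trans (hroot y)

/-- The vector on the vertices of `attach G u L` whose restriction to `V` is `g` and whose entry at
distance `j ≥ 1` from `u` along the `i`-th path is `f i j`. The values `f i 0` do not occur in it;
they are meant to equal `g u`. -/
def attachVec (g : V → ℝ) (f : Fin L.length → ℕ → ℝ) :
    V ⊕ (Σ i : Fin L.length, Fin (L.get i)) → ℝ
  | .inl a => g a
  | .inr ⟨i, j⟩ => f i (j + 1)

lemma exists_eq_attachVec (u : V) (x : V ⊕ (Σ i : Fin L.length, Fin (L.get i)) → ℝ) :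
    ∃ (g : V → ℝ) (f : Fin L.length → ℕ → ℝ), (∀ i, f i 0 = g u) ∧ x = attachVec g f := by
  refine ⟨fun a => x (.inl a), fun i j => j.casesOn (x (.inl u)) fun k =>
    if h : k < L.get i then x (.inr ⟨i, k, h⟩) else 0, fun i => rfl, ?_⟩
  funext v
  rcases v with a | ⟨i, j⟩
  · rfl
  · simp only [attachVec, j.isLt, dif_pos]

variable [Fintype V] {α : ℝ} {g : V → ℝ} {f : Fin L.length → ℕ → ℝ}

lemma attachVec_dotProduct_self :
    attachVec g f ⬝ᵥ attachVec g f =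
      g ⬝ᵥ g + ∑ i, ∑ j ∈ range (L.get i), f i (j + 1) * f i (j + 1) := by
  simp only [dotProduct, Fintype.sum_sum_type, Fintype.sum_sigma, attachVec]
  congr! 2 with i
  exact Fin.sum_univ_eq_sum_range (fun j => f i (j + 1) * f i (j + 1)) _

variable [DecidableEq V]

lemma Aalpha_attach_mulVec_inl (hf : ∀ i, f i 0 = g u) (a : V) :
    (Aalpha α (attach G u L) *ᵥ attachVec g f) (.inl a) = (Aalpha α G *ᵥ g) a +
      if a = u then ∑ i, (if 0 < L.get i then α * f i 0 + (1 - α) * f i 1 else 0) else 0 := by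
  classical
  simp only [Aalpha_mulVec_apply, Fintype.sum_sum_type, Fintype.sum_sigma, attach_adj_inl_inl,
    attach_adj_inl_inr, attachVec, hf]
  congr 1
  split_ifs with ha
  · subst ha
    simp only [true_and]
    congr! 1 with i
    exact sum_fin_ite_val_eq _ 0 fun j => α * g a + (1 - α) * f i (j + 1)
  · simp [ha]

lemma Aalpha_attach_mulVec_inr (hf : ∀ i, f i 0 = g u) (i : Fin L.length) (j : Fin (L.get i)) :
    (Aalpha α (attach G u L) *ᵥ attachVec g f) (.inr ⟨i, j⟩) =
      (α * f i (j + 1) + (1 - α) * f i j) +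
        if (j : ℕ) + 1 < L.get i then α * f i (j + 1) + (1 - α) * f i (j + 2) else 0 := by
  classical
  have hbase : ∑ a, (if a = u ∧ (j : ℕ) = 0 then α * f i (j + 1) + (1 - α) * g a else 0) =
      if (j : ℕ) = 0 then α * f i (j + 1) + (1 - α) * f i 0 else 0 := by
    split_ifs with hj <;> simp [hj, hf]
  have harm : ∑ i', ∑ j' : Fin (L.get i'), (if i = i' ∧ ((j : ℕ) + 1 = j' ∨ (j' : ℕ) + 1 = j) then
        α * f i (j + 1) + (1 - α) * f i' (j' + 1) else 0) =
      (if (j : ℕ) = 0 then 0 else α * f i (j + 1) + (1 - α) * f i (j - 1 + 1)) +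
        if (j : ℕ) + 1 < L.get i then α * f i (j + 1) + (1 - α) * f i (j + 2) else 0 := by
    rw [Fintype.sum_eq_single i fun i' hi => by simp [hi.symm]]
    simp only [true_and]
    exact sum_fin_ite_val_succ_or _ _ j.isLt fun k => α * f i (j + 1) + (1 - α) * f i (k + 1)
  simp only [Aalpha_mulVec_apply, Fintype.sum_sum_type, Fintype.sum_sigma, attach_adj_inr_inl,
    attach_adj_inr_inr, attachVec, hbase, harm, ← add_assoc]
  congr 1
  rcases (j : ℕ) with _ | k <;> simp

lemma attachVec_dotProduct_Aalpha_mulVec (hf : ∀ i, f i 0 = g u) :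
    attachVec g f ⬝ᵥ Aalpha α (attach G u L) *ᵥ attachVec g f =
      g ⬝ᵥ Aalpha α G *ᵥ g + ∑ i, pathEnergy α (L.get i) (f i) := by
  have hbase : ∑ a, attachVec g f (.inl a) * (Aalpha α (attach G u L) *ᵥ attachVec g f) (.inl a) =
      g ⬝ᵥ Aalpha α G *ᵥ g +
        ∑ i, f i 0 * (if 0 < L.get i then α * f i 0 + (1 - α) * f i 1 else 0) := by
    simp only [Aalpha_attach_mulVec_inl hf, attachVec, mul_add, sum_add_distrib, dotProduct,
      mul_ite, mul_zero, sum_ite_eq', mem_univ, if_true, mul_sum, hf]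
  have harm : ∀ i, ∑ j : Fin (L.get i), attachVec g f (.inr ⟨i, j⟩) *
      (Aalpha α (attach G u L) *ᵥ attachVec g f) (.inr ⟨i, j⟩) =
        ∑ j ∈ range (L.get i), f i (j + 1) * ((α * f i (j + 1) + (1 - α) * f i j) +
          if j + 1 < L.get i then α * f i (j + 1) + (1 - α) * f i (j + 2) else 0) := by
    intro i
    simp only [Aalpha_attach_mulVec_inr hf, attachVec]
    exact Fin.sum_univ_eq_sum_range (fun j => f i (j + 1) * ((α * f i (j + 1) + (1 - α) * f i j) +
      if j + 1 < L.get i then α * f i (j + 1) + (1 - α) * f i (j + 2) else 0)) _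
  simp only [dotProduct.eq_1 (attachVec g f), Fintype.sum_sum_type, Fintype.sum_sigma, hbase, harm,
    pathEnergy_eq_sum_mul, sum_add_distrib, add_assoc]

end Attach

section Arm

/-- The eigenvalue equations of `A_α` for the eigenvalue `μ` at the vertices `1, …, ℓ` of a path
with `ℓ` edges that is attached at its vertex `0`, for a vector with value `f j` at vertex `j`. -/
def IsArmEigenvector (α μ : ℝ) (ℓ : ℕ) (f : ℕ → ℝ) : Prop :=
  ∀ j < ℓ, (α * f (j + 1) + (1 - α) * f j) +
    (if j + 1 < ℓ then α * f (j + 1) + (1 - α) * f (j + 2) else 0) = μ * f (j + 1)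

variable {α μ : ℝ} {ℓ : ℕ} {f f' : ℕ → ℝ}

lemma IsArmEigenvector.shift {k : ℕ} (h : IsArmEigenvector α μ (k + ℓ) f) :
    IsArmEigenvector α μ ℓ fun j => f (k + j) := by
  intro j hj
  simpa only [add_assoc, add_lt_add_iff_left] using h (k + j) (Nat.add_lt_add_left hj k)

lemma IsArmEigenvector.eq_of_eq_tip (hα1 : α < 1) (h : IsArmEigenvector α μ ℓ f)
    (h' : IsArmEigenvector α μ ℓ f') (htip : f ℓ = f' ℓ) {j : ℕ} (hj : j ≤ ℓ) : f j = f' j := by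
  induction ℓ generalizing f f' j with
  | zero => rwa [Nat.le_zero.1 hj]
  | succ ℓ ih =>
    rw [add_comm] at htip
    have hsucc : ∀ i ≤ ℓ, f (1 + i) = f' (1 + i) := fun i hi =>
      ih (IsArmEigenvector.shift (add_comm ℓ 1 ▸ h)) (IsArmEigenvector.shift (add_comm ℓ 1 ▸ h'))
        htip hi
    rcases j with _ | j
    · have h₀ := h 0 ℓ.succ_pos
      have h₀' := h' 0 ℓ.succ_pos
      have h₁ : f 1 = f' 1 := hsucc 0 ℓ.zero_le
      refine mul_left_cancel₀ (sub_ne_zero.2 hα1.ne') ?_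
      split_ifs at h₀ h₀' with hℓ
      · have h₂ : f 2 = f' 2 := hsucc 1 (by omega)
        simp only [zero_add, h₁, h₂] at h₀ h₀'
        linarith
      · simp only [zero_add, h₁] at h₀ h₀'
        linarith
    · simpa only [add_comm] using hsucc j (by omega)

end Arm

section TwoArms

variable {V : Type} {a b : ℕ} {g : V → ℝ} {z : ℕ → ℝ} {u : V}

/-- The two arms of `attach G u [a, b]` form, together with `u`, a path with `a + b` edges. Counting
its vertices from the end of the second arm, so that `u` is at position `b`, this is the vector
with value `z k` at position `k` and with restriction `g` to `V`; it is meant for `z b = g u`. -/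
def pathVec (a b : ℕ) (g : V → ℝ) (z : ℕ → ℝ) :
    V ⊕ (Σ i : Fin [a, b].length, Fin ([a, b].get i)) → ℝ :=
  attachVec g ![fun j => z (b + j), fun j => z (b - j)]

lemma exists_eq_pathVec (u : V) (x : V ⊕ (Σ i : Fin [a, b].length, Fin ([a, b].get i)) → ℝ) :
    ∃ (g : V → ℝ) (z : ℕ → ℝ), z b = g u ∧ x = pathVec a b g z := by
  obtain ⟨g, f, hf, rfl⟩ := exists_eq_attachVec u x
  refine ⟨g, fun k => if b ≤ k then f 0 (k - b) else f 1 (b - k), by simp [hf], ?_⟩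
  funext v
  rcases v with v | ⟨i, j, hj⟩
  · rfl
  · fin_cases i
    · simp [pathVec, attachVec]
    · have hj' : j < b := hj
      simp [pathVec, attachVec, show ¬ b ≤ b - (j + 1) by omega,
        show b - (b - (j + 1)) = j + 1 by omega]

lemma forall_of_forall_pathVec {P : ℝ → Prop} (hz : z b = g u)
    (h : ∀ v, P (pathVec a b g z v)) {k : ℕ} (hk : k ≤ a + b) : P (z k) := by
  rcases lt_trichotomy k b with hkb | rfl | hkb
  · obtain ⟨j, rfl⟩ := Nat.exists_eq_add_of_lt hkb
    have := h (.inr ⟨1, j, show j < k + j + 1 by omega⟩)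
    simpa [pathVec, attachVec, show k + j + 1 - (j + 1) = k by omega] using this
  · exact hz ▸ h (.inl u)
  · obtain ⟨j, rfl⟩ := Nat.exists_eq_add_of_lt hkb
    exact h (.inr ⟨0, j, show j < a by omega⟩)

lemma sum_range_add_sum_range_sub (φ : ℕ → ℝ) (a b : ℕ) :
    ∑ j ∈ range a, φ (b + j) + ∑ j ∈ range b, φ (b - 1 - j) = ∑ k ∈ range (a + b), φ k := by
  rw [sum_range_reflect, add_comm a b, sum_range_add, add_comm]

lemma sum_pathEnergy_arms (α : ℝ) (a b : ℕ) (z : ℕ → ℝ) :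
    pathEnergy α a (fun j => z (b + j)) + pathEnergy α b (fun j => z (b - j)) =
      pathEnergy α (a + b) z := by
  unfold pathEnergy
  rw [← sum_range_add_sum_range_sub (fun k => edgeEnergy α (z k) (z (k + 1)))]
  congr 1
  refine sum_congr rfl fun j hj => ?_
  have hj' := mem_range.1 hj
  rw [edgeEnergy_comm, show b - 1 - j = b - (j + 1) by omega, show b - (j + 1) + 1 = b - j by omega]

variable [Fintype V] [DecidableEq V] {G : SimpleGraph V} {α μ : ℝ}

lemma pathVec_dotProduct_self (hz : z b = g u) :
    pathVec a b g z ⬝ᵥ pathVec a b g z =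
      ∑ v ∈ univ.erase u, g v ^ 2 + ∑ k ∈ range (a + b + 1), z k ^ 2 := by
  have hbase : g ⬝ᵥ g = ∑ v ∈ univ.erase u, g v ^ 2 + z b ^ 2 := by
    simp only [dotProduct, ← pow_two]
    rw [hz, sum_erase_add _ _ (mem_univ u)]
  have hpath : ∑ k ∈ range (a + b + 1), z k ^ 2 = z b ^ 2 +
      (∑ j ∈ range a, z (b + (j + 1)) ^ 2 + ∑ j ∈ range b, z (b - (j + 1)) ^ 2) := by
    rw [add_right_comm, ← sum_range_add_sum_range_sub (fun k => z k ^ 2), sum_range_succ', add_zero]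
    simp only [Nat.sub_add_eq, Nat.sub_right_comm]
    ring
  rw [pathVec, attachVec_dotProduct_self, hbase, hpath, add_assoc]
  simp only [← pow_two]
  congr 2
  exact Fin.sum_univ_two _

lemma pathVec_dotProduct_Aalpha_mulVec (hz : z b = g u) :
    pathVec a b g z ⬝ᵥ Aalpha α (attach G u [a, b]) *ᵥ pathVec a b g z =
      g ⬝ᵥ Aalpha α G *ᵥ g + pathEnergy α (a + b) z := by
  rw [pathVec, attachVec_dotProduct_Aalpha_mulVec (by simp [Fin.forall_fin_two, hz]),
    ← sum_pathEnergy_arms]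
  congr 1
  exact Fin.sum_univ_two _

end TwoArms

section Polarization

/-- The polarization of the finite sequence `z 0, …, z m` with respect to the reflection
`k ↦ m - k`: in each pair `{z k, z (m - k)}` the larger value is moved to the first half. -/
noncomputable def polarize (m : ℕ) (z : ℕ → ℝ) (k : ℕ) : ℝ :=
  if 2 * k ≤ m then max (z k) (z (m - k)) else min (z k) (z (m - k))

variable {α : ℝ} {m k : ℕ} {z : ℕ → ℝ}

lemma polarize_of_two_mul_le (h : 2 * k ≤ m) : polarize m z k = max (z k) (z (m - k)) :=
  if_pos h

lemma polarize_of_le_two_mul (h : m ≤ 2 * k) : polarize m z k = min (z k) (z (m - k)) := by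
  rcases h.eq_or_lt with rfl | h
  · rw [polarize_of_two_mul_le le_rfl, show 2 * k - k = k by omega, max_self, min_self]
  · exact if_neg (by omega)

lemma le_polarize_succ {c d : ℕ} (h : z c ≤ z (c + d + 1)) :
    z (c + d) ≤ polarize (c + d + 1 + c) z (c + 1) := by
  rcases d.eq_zero_or_pos with rfl | hd
  · rw [polarize_of_le_two_mul (by omega), show c + 0 + 1 + c - (c + 1) = c by omega]
    exact le_min h le_rfl
  · rw [polarize_of_two_mul_le (by omega), show c + d + 1 + c - (c + 1) = c + d by omega]
    exact le_max_right _ _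

lemma map_polarize_add_map_polarize_sub (φ : ℝ → ℝ) (hk : k ≤ m) :
    φ (polarize m z k) + φ (polarize m z (m - k)) = φ (z k) + φ (z (m - k)) := by
  have hkk : m - (m - k) = k := by omega
  rcases le_total (2 * k) m with h | h
  · rw [polarize_of_two_mul_le h, polarize_of_le_two_mul (by omega), hkk, min_comm]
    exact fn_max_add_fn_min φ _ _
  · rw [polarize_of_le_two_mul h, polarize_of_two_mul_le (by omega), hkk, max_comm]
    exact fn_min_add_fn_max φ _ _

lemma sum_range_map_polarize (φ : ℝ → ℝ) (m : ℕ) (z : ℕ → ℝ) :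
    ∑ k ∈ range (m + 1), φ (polarize m z k) = ∑ k ∈ range (m + 1), φ (z k) := by
  have hdouble : ∀ y : ℕ → ℝ,
      2 * ∑ k ∈ range (m + 1), φ (y k) = ∑ k ∈ range (m + 1), (φ (y k) + φ (y (m - k))) := by
    intro y
    rw [sum_add_distrib, ← sum_range_reflect (fun k => φ (y k)) (m + 1), two_mul]
    simp
  refine mul_left_cancel₀ two_ne_zero ?_
  rw [hdouble, hdouble]
  exact sum_congr rfl fun k hk =>
    map_polarize_add_map_polarize_sub φ (Nat.lt_succ_iff.1 (mem_range.1 hk))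

lemma edgeEnergy_add_reflect_le_polarize (hα1 : α ≤ 1) (z : ℕ → ℝ) (hk : k < m) :
    edgeEnergy α (z k) (z (k + 1)) + edgeEnergy α (z (m - 1 - k)) (z (m - 1 - k + 1)) ≤
      edgeEnergy α (polarize m z k) (polarize m z (k + 1)) +
        edgeEnergy α (polarize m z (m - 1 - k)) (polarize m z (m - 1 - k + 1)) := by
  obtain ⟨l, rfl⟩ : ∃ l, m = k + l + 1 := ⟨m - 1 - k, by omega⟩
  rw [show k + l + 1 - 1 - k = l by omega]
  have hsub : k + l + 1 - k = l + 1 ∧ k + l + 1 - (k + 1) = l ∧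
      k + l + 1 - l = k + 1 ∧ k + l + 1 - (l + 1) = k := by omega
  obtain ⟨h₁, h₂, h₃, h₄⟩ := hsub
  rcases lt_trichotomy k l with h | rfl | h
  · rw [polarize_of_two_mul_le (k := k) (by omega), polarize_of_two_mul_le (k := k + 1) (by omega),
      polarize_of_le_two_mul (k := l) (by omega), polarize_of_le_two_mul (k := l + 1) (by omega),
      h₁, h₂, h₃, h₄]
    have := edgeEnergy_add_le_max_add_min hα1 (z k) (z (k + 1)) (z (l + 1)) (z l)
    rwa [min_comm (z k), min_comm (z (k + 1)), edgeEnergy_comm α (z (l + 1)),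
      edgeEnergy_comm α (min _ _)] at this
  · rw [polarize_of_two_mul_le (k := k) (by omega), polarize_of_le_two_mul (k := k + 1) (by omega),
      h₁, h₂]
    rcases le_total (z k) (z (k + 1)) with h | h <;>
      simp [h, edgeEnergy_comm α (z (k + 1)) (z k)]
  · rw [polarize_of_le_two_mul (k := k) (by omega), polarize_of_le_two_mul (k := k + 1) (by omega),
      polarize_of_two_mul_le (k := l) (by omega), polarize_of_two_mul_le (k := l + 1) (by omega),
      h₁, h₂, h₃, h₄]
    have := edgeEnergy_add_le_max_add_min hα1 (z l) (z (l + 1)) (z (k + 1)) (z k)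
    rw [min_comm (z l), min_comm (z (l + 1)), edgeEnergy_comm α (z (k + 1)),
      edgeEnergy_comm α (min _ _)] at this
    linarith

lemma pathEnergy_le_pathEnergy_polarize (hα1 : α ≤ 1) (m : ℕ) (z : ℕ → ℝ) :
    pathEnergy α m z ≤ pathEnergy α m (polarize m z) := by
  have hdouble : ∀ y : ℕ → ℝ, 2 * pathEnergy α m y = ∑ k ∈ range m,
      (edgeEnergy α (y k) (y (k + 1)) +
        edgeEnergy α (y (m - 1 - k)) (y (m - 1 - k + 1))) := by
    intro y
    rw [sum_add_distrib, sum_range_reflect (fun k => edgeEnergy α (y k) (y (k + 1))), two_mul]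
    rfl
  refine le_of_mul_le_mul_left ?_ (zero_lt_two' ℝ)
  rw [hdouble, hdouble]
  exact sum_le_sum fun k hk => edgeEnergy_add_reflect_le_polarize hα1 z (mem_range.1 hk)

/-- The sequence `z (m + 1), y 0, …, y m`, where `y` is the polarization of `z 0, …, z m`. -/
noncomputable def rotatePolarize (m : ℕ) (z : ℕ → ℝ) : ℕ → ℝ
  | 0 => z (m + 1)
  | k + 1 => polarize m z k

lemma sum_range_map_rotatePolarize (φ : ℝ → ℝ) (m : ℕ) (z : ℕ → ℝ) :
    ∑ k ∈ range (m + 2), φ (rotatePolarize m z k) = ∑ k ∈ range (m + 2), φ (z k) := by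
  rw [sum_range_succ', sum_range_succ _ (m + 1)]
  exact congrArg (· + φ (z (m + 1))) (sum_range_map_polarize φ m z)

lemma pathEnergy_le_pathEnergy_rotatePolarize (hα0 : 0 ≤ α) (hα1 : α ≤ 1) (hm : 0 ≤ z m)
    (hm' : 0 ≤ z (m + 1)) :
    pathEnergy α (m + 1) z ≤ pathEnergy α (m + 1) (rotatePolarize m z) := by
  have hend : z m ≤ polarize m z 0 := by
    simp [polarize_of_two_mul_le]
  have hedge : edgeEnergy α (z m) (z (m + 1)) ≤ edgeEnergy α (z (m + 1)) (polarize m z 0) :=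
    edgeEnergy_comm α (z m) _ ▸ edgeEnergy_mono_right hα0 hα1 hm' hm hend
  calc pathEnergy α (m + 1) z = pathEnergy α m z + edgeEnergy α (z m) (z (m + 1)) :=
        sum_range_succ _ _
    _ ≤ pathEnergy α m (polarize m z) + edgeEnergy α (z (m + 1)) (polarize m z 0) :=
        add_le_add (pathEnergy_le_pathEnergy_polarize hα1 m z) hedge
    _ = pathEnergy α (m + 1) (rotatePolarize m z) :=
        (sum_range_succ' (fun k => edgeEnergy α (rotatePolarize m z k)
          (rotatePolarize m z (k + 1))) m).symm

end Polarization

section Eigenvector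

variable {V : Type} [Fintype V] [DecidableEq V] {G : SimpleGraph V} {u : V} {α μ : ℝ} {g : V → ℝ}

lemma isArmEigenvector_of_mulVec_attachVec {L : List ℕ} {f : Fin L.length → ℕ → ℝ}
    (hf : ∀ i, f i 0 = g u)
    (h : Aalpha α (attach G u L) *ᵥ attachVec g f = μ • attachVec g f) (i : Fin L.length) :
    IsArmEigenvector α μ (L.get i) (f i) :=
  fun j hj => (Aalpha_attach_mulVec_inr hf i ⟨j, hj⟩).symm.trans (congrFun h _)

variable {a b : ℕ} {z : ℕ → ℝ}

lemma isArmEigenvector_of_mulVec_pathVec (hz : z b = g u)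
    (h : Aalpha α (attach G u [a, b]) *ᵥ pathVec a b g z = μ • pathVec a b g z) :
    IsArmEigenvector α μ a (fun j => z (b + j)) ∧ IsArmEigenvector α μ b (fun j => z (b - j)) :=
  have harm := isArmEigenvector_of_mulVec_attachVec (by simp [Fin.forall_fin_two, hz]) h
  ⟨harm 0, harm 1⟩

lemma root_eq_of_mulVec_pathVec (ha : 0 < a) (hb : 0 < b) (hz : z b = g u)
    (h : Aalpha α (attach G u [a, b]) *ᵥ pathVec a b g z = μ • pathVec a b g z) :
    (Aalpha α G *ᵥ g) u +
      ((α * z b + (1 - α) * z (b + 1)) + (α * z b + (1 - α) * z (b - 1))) = μ * z b := by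
  have hrow := congrFun h (.inl u)
  rw [pathVec, Aalpha_attach_mulVec_inl (by simp [Fin.forall_fin_two, hz]), if_pos rfl,
    Pi.smul_apply, attachVec, ← hz, smul_eq_mul] at hrow
  refine Eq.trans (congrArg _ ?_) hrow
  refine Eq.trans ?_ (Fin.sum_univ_two _).symm
  simp [ha, hb]

end Eigenvector

section Comparison

variable {V : Type} [DecidableEq V] {u : V} {g : V → ℝ} {z : ℕ → ℝ} {p c : ℕ}

/-- Given the vector `pathVec (p + 1) c g z` on `attach G u [p + 1, c]`, the vector on
`attach G u [p, c + 1]` obtained by moving the last vertex of the first arm to the end of the second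
arm and polarizing the values on the remaining path. The value at `u` is changed accordingly. -/
noncomputable def polarizeArms (p c : ℕ) (u : V) (g : V → ℝ) (z : ℕ → ℝ) :
    V ⊕ (Σ i : Fin [p, c + 1].length, Fin ([p, c + 1].get i)) → ℝ :=
  pathVec p (c + 1) (Function.update g u (polarize (p + c) z c)) (rotatePolarize (p + c) z)

lemma rotatePolarize_succ_eq_update (p c : ℕ) (u : V) (g : V → ℝ) (z : ℕ → ℝ) :
    rotatePolarize (p + c) z (c + 1) = Function.update g u (polarize (p + c) z c) u :=
  (Function.update_self u _ g).symm

lemma le_update_polarize (hcp : c ≤ p) (hz : z c = g u) :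
    g ≤ Function.update g u (polarize (p + c) z c) := by
  rw [le_update_self_iff, ← hz, polarize_of_two_mul_le (by omega)]
  exact le_max_left _ _

variable [Fintype V] {G : SimpleGraph V} {α μ : ℝ}

lemma polarizeArms_dotProduct_self (hz : z c = g u) :
    polarizeArms p c u g z ⬝ᵥ polarizeArms p c u g z =
      pathVec (p + 1) c g z ⬝ᵥ pathVec (p + 1) c g z := by
  rw [polarizeArms, pathVec_dotProduct_self (rotatePolarize_succ_eq_update p c u g z),
    pathVec_dotProduct_self hz]
  congr 1
  · exact sum_congr rfl fun v hv => by rw [Function.update_of_ne (ne_of_mem_erase hv)]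
  · rw [add_right_comm p 1 c]
    exact sum_range_map_rotatePolarize (· ^ 2) (p + c) z

lemma pathVec_dotProduct_le_polarizeArms (hα0 : 0 ≤ α) (hα1 : α ≤ 1) (hcp : c ≤ p)
    (hz : z c = g u) (hg : 0 ≤ g) (hm : 0 ≤ z (p + c)) (hm' : 0 ≤ z (p + c + 1)) :
    pathVec (p + 1) c g z ⬝ᵥ Aalpha α (attach G u [p + 1, c]) *ᵥ pathVec (p + 1) c g z ≤
      polarizeArms p c u g z ⬝ᵥ
        Aalpha α (attach G u [p, c + 1]) *ᵥ polarizeArms p c u g z := by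
  rw [polarizeArms, pathVec_dotProduct_Aalpha_mulVec hz,
    pathVec_dotProduct_Aalpha_mulVec (rotatePolarize_succ_eq_update p c u g z),
    add_right_comm p 1 c]
  exact add_le_add
    (dotProduct_mulVec_mono (Aalpha_nonneg hα0 hα1) hg (le_update_polarize hcp hz))
    (pathEnergy_le_pathEnergy_rotatePolarize hα0 hα1 hm hm')

lemma eq_rotatePolarize_of_mulVec (hα1 : α < 1) (hcp : c ≤ p) (hz : z c = g u)
    (h : Aalpha α (attach G u [p + 1, c]) *ᵥ pathVec (p + 1) c g z = μ • pathVec (p + 1) c g z)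
    (h' : Aalpha α (attach G u [p, c + 1]) *ᵥ polarizeArms p c u g z =
      μ • polarizeArms p c u g z) {j : ℕ} (hj : j ≤ c + 1) :
    z (p + j) = rotatePolarize (p + c) z (c + 1 - j) := by
  have hfst := (isArmEigenvector_of_mulVec_pathVec hz h).1
  rw [polarizeArms] at h'
  have hsnd := (isArmEigenvector_of_mulVec_pathVec (rotatePolarize_succ_eq_update p c u g z) h').2
  rw [show p + 1 = (p - c) + (c + 1) by omega] at hfst
  have htip : z (c + (p - c + (c + 1))) = rotatePolarize (p + c) z (c + 1 - (c + 1)) := by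
    rw [Nat.sub_self, show c + (p - c + (c + 1)) = p + c + 1 by omega]
    rfl
  have hagree := hfst.shift.eq_of_eq_tip hα1 hsnd htip hj
  rwa [← add_assoc, Nat.add_sub_cancel' hcp] at hagree

lemma mulVec_polarizeArms_ne [Nontrivial V] (hG : G.Preconnected) (hα0 : 0 ≤ α) (hα1 : α < 1)
    (hcp : c < p) (hz : z c = g u) (hg : ∀ v, 0 < g v)
    (h : Aalpha α (attach G u [p + 1, c]) *ᵥ pathVec (p + 1) c g z = μ • pathVec (p + 1) c g z) :
    Aalpha α (attach G u [p, c + 1]) *ᵥ polarizeArms p c u g z ≠ μ • polarizeArms p c u g z := by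
  intro h'
  have hagree := fun j => eq_rotatePolarize_of_mulVec hα1 hcp.le hz h h' (j := j)
  obtain ⟨d, rfl⟩ := Nat.exists_eq_add_of_lt hcp
  set y := rotatePolarize (c + d + 1 + c) z
  set g' := Function.update g u (polarize (c + d + 1 + c) z c)
  have hyg' : y (c + 1) = g' u := rotatePolarize_succ_eq_update _ c u g z
  have hgg' : g ≤ g' := le_update_polarize hcp.le hz
  have hroot : z (c + d + 1) = y (c + 1) := hagree 0 (Nat.zero_le _)
  have hbelow : z (c + d + 2) = y c := hagree 1 (by omega)
  have habove : (1 - α) * z (c + d) ≤ (1 - α) * y (c + 2) := by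
    refine mul_le_mul_of_nonneg_left (le_polarize_succ ?_) (sub_nonneg.2 hα1.le)
    rw [hz, hroot, hyg']
    exact hgg' u
  have hrow : (α * z (c + d + 1) + (1 - α) * z (c + d)) +
      (α * z (c + d + 1) + (1 - α) * z (c + d + 2)) = μ * z (c + d + 1) := by
    have harm := (isArmEigenvector_of_mulVec_pathVec hz h).1 d (by omega)
    rwa [if_pos (by omega)] at harm
  have hrow' : (Aalpha α G *ᵥ g') u + ((α * y (c + 1) + (1 - α) * y (c + 2)) +
      (α * y (c + 1) + (1 - α) * y c)) = μ * y (c + 1) :=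
    root_eq_of_mulVec_pathVec (Nat.succ_pos _) c.succ_pos hyg' h'
  have hpos : 0 < (Aalpha α G *ᵥ g') u :=
    Aalpha_mulVec_pos hα0 hα1 hG (fun v => (hg v).trans_le (hgg' v)) u
  rw [← hroot, ← hbelow] at hrow'
  linarith

end Comparison

theorem stmt15_general {V : Type} [Fintype V] [DecidableEq V] [Nontrivial V] {G : SimpleGraph V}
    (hG : G.Connected) (u : V) {α : ℝ} (hα0 : 0 ≤ α) (hα1 : α < 1) {p q : ℕ} (hq : 1 ≤ q)
    (hpq : q ≤ p) : rho α (attach G u [p + 1, q - 1]) < rho α (attach G u [p, q]) := by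
  obtain ⟨c, rfl⟩ := Nat.exists_eq_add_of_le' hq
  rw [Nat.add_sub_cancel]
  by_contra! hle
  have : Nontrivial (V ⊕ (Σ i : Fin [p + 1, c].length, Fin ([p + 1, c].get i))) :=
    Sum.inl_injective.nontrivial
  obtain ⟨x, hx, heig⟩ := exists_pos_mulVec_eq_sSup_spectrum_smul (Aalpha_isHermitian α _)
    (Aalpha_isIrreducible hα0 hα1 (attach_preconnected hG.preconnected u [p + 1, c]))
  obtain ⟨g, z, hz, rfl⟩ := exists_eq_pathVec u x
  have hzpos {k} (hk) := forall_of_forall_pathVec (P := (0 < ·)) hz hx (k := k) hk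
  refine mulVec_polarizeArms_ne hG.preconnected hα0 hα1 hpq hz (fun v => hx (.inl v)) heig
    (mulVec_eq_smul_of_sSup_spectrum_le (Aalpha_isHermitian α _) hle ?_)
  calc rho α (attach G u [p + 1, c]) * (polarizeArms p c u g z ⬝ᵥ polarizeArms p c u g z)
      = pathVec (p + 1) c g z ⬝ᵥ
          Aalpha α (attach G u [p + 1, c]) *ᵥ pathVec (p + 1) c g z := by
        rw [heig, dotProduct_smul, smul_eq_mul, polarizeArms_dotProduct_self hz, rho]
    _ ≤ _ := pathVec_dotProduct_le_polarizeArms hα0 hα1.le (by omega) hz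
        (fun v => (hx (.inl v)).le) (hzpos (by omega)).le (hzpos (by omega)).le

theorem stmt15 {M : ℕ} (G : SimpleGraph (Fin (M + 1))) (hG : G.Connected)
    (hE : ∃ v w, G.Adj v w) (u : Fin (M + 1))
    (α : ℝ) (hα : 0 ≤ α ∧ α < 1) (p q : ℕ) (hq : 1 ≤ q) (hpq : q ≤ p) :
    rho α (attach G u [p + 1, q - 1]) < rho α (attach G u [p, q]) := by
  have : Nontrivial (Fin (M + 1)) := let ⟨v, w, hvw⟩ := hE; ⟨v, w, hvw.ne⟩
  exact stmt15_general hG u hα.1 hα.2 hq hpq
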